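/- For every integer d ≥ 1 and every real m ∈ [−1, 1] with m ≠ 0, the sequence of iterates g_d^{(k)}(m) converges to sgn(m) as k → ∞. -/

import Mathlib

noncomputable def g (d : ℕ) : ℝ → ℝ :=
  fun m => ∑ i ∈ Finset.range (d + 1),
    (1 / 4 ^ i : ℝ) * (Nat.choose (2 * i) i) * (m * (1 - m ^ 2) ^ i)

noncomputable def sgn (m : ℝ) : ℝ :=
  if m > 0 then 1 else if m = 0 then 0 else -1

/-!
The coefficients of `g d` are chosen so that its derivative telescopes to a nonnegative multiple of
`(1 - m ^ 2) ^ d`. Hence `g d` increases on `[-1, 1]` to its value `1` at `1`. On `(0, 1)` every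
summand is positive and the zeroth one is `m`, so `m < g d m`. The orbit of a positive `m` is
therefore monotone and bounded by `1`, and its limit, being a fixed point in `[m, 1]`, can only be
`1`. Negative `m` follow because `g d` is odd.
-/

open Filter Set Topology

theorem isFixedPt_of_tendsto_iterate_of_continuousWithinAt {α : Type*} [TopologicalSpace α]
    [T2Space α] {f : α → α} {s : Set α} {x y : α} (hy : Tendsto (fun n => f^[n] x) atTop (𝓝 y))
    (hf : ContinuousWithinAt f s y) (hs : ∀ n, f^[n] x ∈ s) : Function.IsFixedPt f y := by
  have map_tendsto : Tendsto (fun n => f (f^[n] x)) atTop (𝓝 (f y)) :=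
    hf.tendsto.comp (tendsto_nhdsWithin_iff.2 ⟨hy, Eventually.of_forall hs⟩)
  refine tendsto_nhds_unique map_tendsto ?_
  simpa only [Function.iterate_succ_apply'] using (tendsto_add_atTop_iff_nat 1).2 hy

theorem tendsto_iterate_of_lt_map {α : Type*} [ConditionallyCompleteLinearOrder α]
    [TopologicalSpace α] [OrderTopology α] {f : α → α} {a b : α} (hab : a ≤ b)
    (hf : ContinuousOn f (Ico a b)) (hlt : ∀ x ∈ Ico a b, x < f x)
    (hle : ∀ x ∈ Ico a b, f x ≤ b) (hb : f b = b) :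
    Tendsto (fun n => f^[n] a) atTop (𝓝 b) := by
  have map_mem : ∀ x ∈ Icc a b, f x ∈ Icc x b := by
    intro x hx
    rcases hx.2.eq_or_lt with rfl | hxb
    · simp only [hb, Icc_self, mem_singleton_iff]
    · exact ⟨(hlt x ⟨hx.1, hxb⟩).le, hle x ⟨hx.1, hxb⟩⟩
  have orbit_mem : ∀ n, f^[n] a ∈ Icc a b := fun n =>
    MapsTo.iterate (fun x hx => Icc_subset_Icc_left hx.1 (map_mem x hx)) n (left_mem_Icc.2 hab)
  have orbit_mono : Monotone fun n => f^[n] a := monotone_nat_of_le_succ fun n => by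
    rw [Function.iterate_succ_apply']
    exact (map_mem _ (orbit_mem n)).1
  have orbit_bdd : BddAbove (range fun n => f^[n] a) :=
    ⟨b, forall_mem_range.2 fun n => (orbit_mem n).2⟩
  obtain ⟨L, hL⟩ : ∃ L, Tendsto (fun n => f^[n] a) atTop (𝓝 L) :=
    ⟨_, tendsto_atTop_ciSup orbit_mono orbit_bdd⟩
  have haL : a ≤ L := ge_of_tendsto' hL fun n => (orbit_mem n).1
  have hLb : L ≤ b := le_of_tendsto' hL fun n => (orbit_mem n).2
  suffices L = b from this ▸ hL
  by_contra hne
  have hL_mem : L ∈ Ico a b := ⟨haL, hLb.lt_of_ne hne⟩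
  have orbit_mem_Ico : ∀ n, f^[n] a ∈ Ico a b := fun n =>
    ⟨(orbit_mem n).1, (orbit_mono.ge_of_tendsto hL n).trans_lt hL_mem.2⟩
  have hfix : Function.IsFixedPt f L :=
    isFixedPt_of_tendsto_iterate_of_continuousWithinAt hL (hf L hL_mem) orbit_mem_Ico
  exact (hlt L hL_mem).ne' hfix

theorem hasDerivAt_mul_one_sub_sq_pow_succ {𝕜 : Type*} [NontriviallyNormedField 𝕜] (n : ℕ)
    (x : 𝕜) : HasDerivAt (fun y => y * (1 - y ^ 2) ^ (n + 1))
      ((2 * n + 3) * (1 - x ^ 2) ^ (n + 1) - 2 * (n + 1) * (1 - x ^ 2) ^ n) x := by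
  have hsq : HasDerivAt (fun y : 𝕜 => 1 - y ^ 2) (-(2 * x)) x := by
    simpa using (hasDerivAt_pow 2 x).const_sub 1
  refine ((hasDerivAt_id' x).mul (hsq.pow (n + 1))).congr_deriv ?_
  simp only [Pi.pow_apply, Nat.add_sub_cancel]
  push_cast
  ring

theorem two_mul_succ_mul_centralBinom_succ_div_four_pow {K : Type*} [Field K] [CharZero K]
    (n : ℕ) : 2 * (n + 1) * (Nat.centralBinom (n + 1) / 4 ^ (n + 1) : K) =
      (2 * n + 1) * (Nat.centralBinom n / 4 ^ n) := by
  have hrec : ((n + 1) * Nat.centralBinom (n + 1) : K) = 2 * (2 * n + 1) * Nat.centralBinom n := by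
    exact_mod_cast Nat.succ_mul_centralBinom_succ n
  rw [pow_succ]
  linear_combination hrec / (2 * 4 ^ n)

theorem g_zero (m : ℝ) : g 0 m = m := by
  simp [g]

theorem g_succ (d : ℕ) (m : ℝ) : g (d + 1) m =
    g d m + Nat.centralBinom (d + 1) / 4 ^ (d + 1) * (m * (1 - m ^ 2) ^ (d + 1)) := by
  simp only [g, Finset.sum_range_succ _ (d + 1), Nat.centralBinom_eq_two_mul_choose]
  ring

theorem g_neg (d : ℕ) (m : ℝ) : g d (-m) = -g d m := by
  simp [g]

theorem iterate_g_neg (d k : ℕ) (m : ℝ) : (g d)^[k] (-m) = -(g d)^[k] m :=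
  (Function.Commute.iterate_left (g_neg d) k) m

theorem g_one (d : ℕ) : g d 1 = 1 := by
  induction d with
  | zero => exact g_zero 1
  | succ d ih => simp [g_succ, ih]

theorem hasDerivAt_g (d : ℕ) (m : ℝ) :
    HasDerivAt (g d) ((2 * d + 1) * (Nat.centralBinom d / 4 ^ d) * (1 - m ^ 2) ^ d) m := by
  induction d with
  | zero => simpa [funext g_zero] using hasDerivAt_id' m
  | succ d ih =>
    rw [funext (g_succ d)]
    refine (ih.add ((hasDerivAt_mul_one_sub_sq_pow_succ d m).const_mul _)).congr_deriv ?_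
    rw [← two_mul_succ_mul_centralBinom_succ_div_four_pow]
    push_cast
    ring

theorem continuous_g (d : ℕ) : Continuous (g d) :=
  continuous_iff_continuousAt.2 fun m => (hasDerivAt_g d m).continuousAt

theorem monotoneOn_g (d : ℕ) : MonotoneOn (g d) (Icc (-1) 1) := by
  refine monotoneOn_of_hasDerivWithinAt_nonneg (convex_Icc _ _) (continuous_g d).continuousOn
    (fun m _ => (hasDerivAt_g d m).hasDerivWithinAt) fun m hm => ?_
  have hsq : 0 ≤ 1 - m ^ 2 := sub_nonneg.2 ((sq_le_one_iff_abs_le_one m).2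
    (abs_le.2 (mem_Icc.1 (interior_subset hm))))
  positivity

theorem g_le_one (d : ℕ) {m : ℝ} (hm : m ∈ Icc (-1) 1) : g d m ≤ 1 :=
  (monotoneOn_g d hm (by norm_num) hm.2).trans_eq (g_one d)

theorem self_lt_g {d : ℕ} (hd : 0 < d) {m : ℝ} (hm : m ∈ Ioo 0 1) : m < g d m := by
  have hm_pos : 0 < m := hm.1
  have hsq : 0 < 1 - m ^ 2 := sub_pos.2 (pow_lt_one₀ hm.1.le hm.2 two_ne_zero)
  induction d, hd using Nat.le_induction with
  | base =>
    rw [g_succ, g_zero]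
    have hcoeff : 0 < Nat.centralBinom 1 := Nat.centralBinom_pos 1
    exact lt_add_of_pos_right _ (by positivity)
  | succ d _ ih =>
    rw [g_succ]
    exact lt_add_of_lt_of_nonneg ih (by positivity)

theorem tendsto_iterate_g_of_pos {d : ℕ} (hd : 0 < d) {m : ℝ} (hm : m ∈ Ioc 0 1) :
    Tendsto (fun k => (g d)^[k] m) atTop (𝓝 1) :=
  tendsto_iterate_of_lt_map hm.2 (continuous_g d).continuousOn
    (fun _ hx => self_lt_g hd ⟨hm.1.trans_le hx.1, hx.2⟩)
    (fun _ hx => g_le_one d ⟨by linarith [hm.1, hx.1], hx.2.le⟩) (g_one d)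

theorem stmt_10 (d : ℕ) (hd : 1 ≤ d) (m : ℝ) (hm : m ∈ Set.Icc (-1 : ℝ) 1)
    (hm0 : m ≠ 0) :
    Filter.Tendsto (fun k => (g d)^[k] m) Filter.atTop (nhds (sgn m)) := by
  rcases hm0.lt_or_gt with hneg | hpos
  · have hsgn : sgn m = -1 := by simp [sgn, hneg.not_gt, hm0]
    have hlim := tendsto_iterate_g_of_pos hd ⟨neg_pos.2 hneg, neg_le.1 hm.1⟩
    simpa only [hsgn, iterate_g_neg, neg_neg] using hlim.neg
  · have hsgn : sgn m = 1 := if_pos hpos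
    exact hsgn ▸ tendsto_iterate_g_of_pos hd ⟨hpos, hm.2⟩
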